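/- Let k be a commutative unital ring, n a natural number, and ε ∈ k invertible. Then there is an isomorphism of graded k-modules Tor_*^{BR_n(ε)}(𝟙,𝟙) ≅ Tor_*^{k[B_n]}(k,k) = H_*(B_n; k), where B_n is the braid group on n strands and k[B_n] its group algebra with k carrying the trivial B_n-action. -/

import Mathlib

open scoped TensorProduct

noncomputable section

/-! ### Bar-complex homology of an augmented algebra

For a `k`-algebra `A` with augmentation `ε : A →ₐ[k] k` (the algebra map corresponding to
the trivial module `𝟙 = k`), we form the (unnormalized) bar complex `C_q = A^{⊗ q}`
(tensors over `k`), with the usual differential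
`d(a₁⊗…⊗a_q) = ε(a₁)(a₂⊗…) + Σ (-1)^i (…a_i a_{i+1}…) + (-1)^q ε(a_q)(a₁⊗…)`,
whose homology is `Tor_*^A(𝟙,𝟙)`. -/

/-- The modules `A^{⊗ q}` of the bar complex. -/
def barC (k : Type) [CommRing k] (A : Type) [Ring A] [Algebra k A] : ℕ → ModuleCat k
  | 0 => ModuleCat.of k k
  | (q + 1) => ModuleCat.of k (A ⊗[k] (barC k A q))

variable (k : Type) [CommRing k] (A : Type) [Ring A] [Algebra k A] (ε : A →ₐ[k] k)

/-- Left multiplication of `A` on the leftmost bar factor (via `ε` in degree `0`). -/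
def barAct : ∀ q : ℕ, A →ₗ[k] ((barC k A q : Type) →ₗ[k] (barC k A q : Type))
  | 0 => (LinearMap.lsmul k k).comp ε.toLinearMap
  | (q + 1) =>
    show A →ₗ[k] ((A ⊗[k] (barC k A q : Type)) →ₗ[k] (A ⊗[k] (barC k A q : Type))) from
    { toFun := fun a => TensorProduct.map (LinearMap.mulLeft k a) LinearMap.id
      map_add' := by
        intro a b
        refine TensorProduct.ext' fun x y => ?_
        simp [add_mul, TensorProduct.add_tmul]
      map_smul' := by
        intro c a
        refine TensorProduct.ext' fun x y => ?_
        simp [TensorProduct.smul_tmul', smul_mul_assoc] }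

/-- All terms of the bar differential except the first face. -/
def barB : ∀ q : ℕ, ((A ⊗[k] (barC k A q : Type)) →ₗ[k] (barC k A q : Type))
  | 0 => - TensorProduct.lift ((LinearMap.lsmul k (barC k A 0 : Type)).comp ε.toLinearMap)
  | (q + 1) =>
    show (A ⊗[k] (A ⊗[k] (barC k A q : Type))) →ₗ[k] (A ⊗[k] (barC k A q : Type)) from
    TensorProduct.lift (LinearMap.mk₂ k
      (fun (a : A) (x : A ⊗[k] (barC k A q : Type)) =>
        -((show A →ₗ[k] ((A ⊗[k] (barC k A q : Type)) →ₗ[k] (A ⊗[k] (barC k A q : Type))) from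
            barAct k A ε (q + 1)) a x) - a ⊗ₜ[k] (barB q x))
      (by intro a b x
          have h : ∀ f : A →ₗ[k] ((A ⊗[k] (barC k A q : Type)) →ₗ[k] (A ⊗[k] (barC k A q : Type))),
              -(f (a + b) x) - (a + b) ⊗ₜ[k] (barB q x)
                = (-(f a x) - a ⊗ₜ[k] (barB q x)) + (-(f b x) - b ⊗ₜ[k] (barB q x)) := by
            intro f
            simp only [map_add, LinearMap.add_apply, TensorProduct.add_tmul]
            try abel
          exact h (barAct k A ε (q + 1)))
      (by intro c a x
          have h : ∀ f : A →ₗ[k] ((A ⊗[k] (barC k A q : Type)) →ₗ[k] (A ⊗[k] (barC k A q : Type))),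
              -(f (c • a) x) - (c • a) ⊗ₜ[k] (barB q x)
                = c • (-(f a x) - a ⊗ₜ[k] (barB q x)) := by
            intro f
            simp only [map_smul, LinearMap.smul_apply, smul_sub, smul_neg,
              TensorProduct.smul_tmul']
          exact h (barAct k A ε (q + 1)))
      (by intro a x y
          simp only [map_add, LinearMap.map_add, TensorProduct.tmul_add]
          try abel)
      (by intro c a x
          simp only [map_smul, LinearMap.map_smul, TensorProduct.tmul_smul, smul_sub, smul_neg]
          try abel))

/-- The bar differential `C_{q+1} = A ⊗ C_q → C_q`. -/
def bard (q : ℕ) : (A ⊗[k] (barC k A q : Type)) →ₗ[k] (barC k A q : Type) :=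
  TensorProduct.lift ((LinearMap.lsmul k (barC k A q : Type)).comp ε.toLinearMap)
  + barB k A ε q

/-- Cycles of the bar complex. -/
def barCycles : ∀ q : ℕ, Submodule k (barC k A q : Type)
  | 0 => ⊤
  | (q + 1) =>
    show Submodule k (barC k A (q + 1) : Type) from LinearMap.ker (bard k A ε q)

/-- `Tor_q^A(𝟙, 𝟙)`, the homology of the algebra `A` with augmentation (trivial module) `ε`,
computed by the bar complex. -/
def barTor (q : ℕ) : Type :=
  (barCycles k A ε q) ⧸
    (Submodule.comap (barCycles k A ε q).subtype (LinearMap.range (bard k A ε q)))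

instance (q : ℕ) : AddCommGroup (barTor k A ε q) :=
  inferInstanceAs (AddCommGroup ((barCycles k A ε q) ⧸
    (Submodule.comap (barCycles k A ε q).subtype (LinearMap.range (bard k A ε q)))))

instance (q : ℕ) : Module k (barTor k A ε q) :=
  inferInstanceAs (Module k ((barCycles k A ε q) ⧸
    (Submodule.comap (barCycles k A ε q).subtype (LinearMap.range (bard k A ε q)))))

/-- The augmentation of a group algebra `k[G]`, corresponding to the trivial action of `G`
on `k`. -/
def groupAug (G : Type) [Group G] : MonoidAlgebra k G →ₐ[k] k :=
  MonoidAlgebra.lift k k G 1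

/-- Group homology `H_*(G; k) = Tor_*^{k[G]}(k, k)` (with the trivial action on `k`). -/
abbrev groupTor (G : Type) [Group G] (q : ℕ) : Type :=
  barTor k (MonoidAlgebra k G) (groupAug k G) q

section Groups

/-- The action of the symmetric group on `G^n` by permuting the factors. -/
def permMulAut (G : Type) [Group G] (n : ℕ) :
    Equiv.Perm (Fin n) →* MulAut (Fin n → G) where
  toFun σ :=
    { toFun := fun f => f ∘ σ.symm
      invFun := fun f => f ∘ σ
      left_inv := fun f => by funext i; simp
      right_inv := fun f => by funext i; simp
      map_mul' := fun f g => rfl }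
  map_one' := by ext f i; rfl
  map_mul' := fun σ τ => by ext f i; rfl

/-- The Artin braid relations, on `m` generators (so for the braid group on `m+1` strands). -/
def braidRels (m : ℕ) : Set (FreeGroup (Fin m)) :=
  { x | ∃ i j : Fin m,
      ((i : ℕ) + 1 = (j : ℕ) ∧
        x = .of i * .of j * .of i * (.of j * .of i * .of j)⁻¹) ∨
      ((i : ℕ) + 1 < (j : ℕ) ∧
        x = .of i * .of j * (.of j * .of i)⁻¹) }

/-- The braid group `B_n` on `n` strands, presented by the Artin generators
`σ_1, …, σ_{n-1}` and the braid relations. -/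
abbrev BraidGroup (n : ℕ) : Type := PresentedGroup (braidRels (n - 1))

private lemma swap_braid {α : Type} [DecidableEq α] (a b c : α)
    (hab : a ≠ b) (hac : a ≠ c) (hbc : b ≠ c) :
    Equiv.swap a b * Equiv.swap b c * Equiv.swap a b
      = Equiv.swap b c * Equiv.swap a b * Equiv.swap b c := by
  have h1 : Equiv.swap b c * Equiv.swap a b * Equiv.swap b c = Equiv.swap c a :=
    Equiv.swap_mul_swap_mul_swap hab hac
  have h2 : Equiv.swap b a * Equiv.swap c b * Equiv.swap b a = Equiv.swap a c :=
    Equiv.swap_mul_swap_mul_swap hbc.symm hac.symm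
  rw [Equiv.swap_comm b a, Equiv.swap_comm c b] at h2
  rw [h1, h2, Equiv.swap_comm]

private lemma swap_swap_comm {α : Type} [DecidableEq α] (a b c d : α)
    (hac : a ≠ c) (had : a ≠ d) (hbc : b ≠ c) (hbd : b ≠ d) :
    Equiv.swap a b * Equiv.swap c d = Equiv.swap c d * Equiv.swap a b := by
  have h := Equiv.swap_apply_apply (Equiv.swap c d) a b
  rw [Equiv.swap_apply_of_ne_of_ne hac had, Equiv.swap_apply_of_ne_of_ne hbc hbd] at h
  exact eq_mul_inv_iff_mul_eq.mp h

/-- The transpositions which are the images of the braid generators. -/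
def braidGen (n : ℕ) (i : Fin (n - 1)) : Equiv.Perm (Fin n) :=
  Equiv.swap ⟨(i : ℕ), by have := i.2; omega⟩ ⟨(i : ℕ) + 1, by have := i.2; omega⟩

private lemma braidGen_braid (n : ℕ) (i j : Fin (n - 1)) (hij : (i : ℕ) + 1 = (j : ℕ)) :
    braidGen n i * braidGen n j * braidGen n i
      = braidGen n j * braidGen n i * braidGen n j := by
  obtain ⟨i, hi⟩ := i
  obtain ⟨j, hj⟩ := j
  simp only at hij
  subst hij
  unfold braidGen
  exact swap_braid _ _ _ (by simp only [ne_eq, Fin.mk.injEq]; omega)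
    (by simp only [ne_eq, Fin.mk.injEq]; omega) (by simp only [ne_eq, Fin.mk.injEq]; omega)

private lemma braidGen_comm (n : ℕ) (i j : Fin (n - 1)) (hij : (i : ℕ) + 1 < (j : ℕ)) :
    braidGen n i * braidGen n j = braidGen n j * braidGen n i := by
  unfold braidGen
  exact swap_swap_comm _ _ _ _ (by simp only [ne_eq, Fin.mk.injEq]; omega)
    (by simp only [ne_eq, Fin.mk.injEq]; omega) (by simp only [ne_eq, Fin.mk.injEq]; omega)
    (by simp only [ne_eq, Fin.mk.injEq]; omega)

/-- The canonical projection from the braid group to the symmetric group. -/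
def braidToPerm (n : ℕ) : BraidGroup n →* Equiv.Perm (Fin n) :=
  PresentedGroup.toGroup (f := braidGen n) (by
    rintro r ⟨i, j, (⟨hij, rfl⟩ | ⟨hij, rfl⟩)⟩ <;>
      simp only [map_mul, map_inv, FreeGroup.lift_apply_of] <;> rw [mul_inv_eq_one]
    · exact braidGen_braid n i j hij
    · exact braidGen_comm n i j hij)

end Groups

section BRsection

/-! The braided rook algebra `BR_n(ε)`: generators `b i`/`bi i` (positive/negative
crossings of strands `i, i+1`) and `p j` (the identity diagram with strand `j` deleted);
an isolated middle vertex arising in a composition is a contractible component and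
contributes the factor `ε`. -/

inductive BRGen (n : ℕ) : Type
  | b : Fin (n - 1) → BRGen n
  | bi : Fin (n - 1) → BRGen n
  | p : Fin n → BRGen n

variable (k : Type) [CommRing k] (n : ℕ) (ε : k)

abbrev BRb (i : Fin (n - 1)) : FreeAlgebra k (BRGen n) := FreeAlgebra.ι k (BRGen.b i)
abbrev BRbi (i : Fin (n - 1)) : FreeAlgebra k (BRGen n) := FreeAlgebra.ι k (BRGen.bi i)
abbrev BRp (j : Fin n) : FreeAlgebra k (BRGen n) := FreeAlgebra.ι k (BRGen.p j)

/-- The diagrammatic relations. -/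
inductive BRRel : FreeAlgebra k (BRGen n) → FreeAlgebra k (BRGen n) → Prop
  | b_inv_r (i : Fin (n - 1)) :
      BRRel (BRb k n i * BRbi k n i) (1)
  | b_inv_l (i : Fin (n - 1)) :
      BRRel (BRbi k n i * BRb k n i) (1)
  | b_braid (i j : Fin (n - 1)) (h : (j : ℕ) = (i : ℕ) + 1) :
      BRRel (BRb k n i * BRb k n j * BRb k n i) (BRb k n j * BRb k n i * BRb k n j)
  | bb_comm (i j : Fin (n - 1)) (h : (i : ℕ) + 1 < (j : ℕ)) :
      BRRel (BRb k n i * BRb k n j) (BRb k n j * BRb k n i)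
  | p_sq (j : Fin n) :
      BRRel (BRp k n j * BRp k n j) (ε • BRp k n j)
  | pp_comm (j l : Fin n) (h : (j : ℕ) < (l : ℕ)) :
      BRRel (BRp k n j * BRp k n l) (BRp k n l * BRp k n j)
  | bp_comm (i : Fin (n - 1)) (l : Fin n) (h : (l : ℕ) ≠ (i : ℕ) ∧ (l : ℕ) ≠ (i : ℕ) + 1) :
      BRRel (BRb k n i * BRp k n l) (BRp k n l * BRb k n i)
  | bp_slide (i : Fin (n - 1)) (j j' : Fin n) (h : (j : ℕ) = (i : ℕ)) (h' : (j' : ℕ) = (i : ℕ) + 1) :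
      BRRel (BRb k n i * BRp k n j) (BRp k n j' * BRb k n i)
  | bp_slide' (i : Fin (n - 1)) (j j' : Fin n) (h : (j : ℕ) = (i : ℕ)) (h' : (j' : ℕ) = (i : ℕ) + 1) :
      BRRel (BRb k n i * BRp k n j') (BRp k n j * BRb k n i)
  | pbp (i : Fin (n - 1)) (j j' : Fin n) (h : (j : ℕ) = (i : ℕ)) (h' : (j' : ℕ) = (i : ℕ) + 1) :
      BRRel (BRp k n j * BRb k n i * BRp k n j) (BRp k n j * BRp k n j')
  | pbb (i : Fin (n - 1)) (j : Fin n) (h : (j : ℕ) = (i : ℕ)) :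
      BRRel (BRp k n j * BRb k n i * BRb k n i) (BRp k n j)
  | pbb' (i : Fin (n - 1)) (j' : Fin n) (h' : (j' : ℕ) = (i : ℕ) + 1) :
      BRRel (BRp k n j' * BRb k n i * BRb k n i) (BRp k n j')

/-- The diagram algebra: the quotient of the free algebra on the diagram generators by
the diagrammatic relations. -/
abbrev BRAlg : Type := RingQuot (BRRel k n ε)

/-- The augmentation corresponding to the trivial module `𝟙`: a diagram acts by `1`
if it has `n` left-to-right connections, and by `0` otherwise. -/
noncomputable def BRaug : BRAlg k n ε →ₐ[k] k :=
  RingQuot.liftAlgHom k ⟨FreeAlgebra.lift k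
      (fun x => match x with
        | BRGen.b _ => (1 : k)
        | BRGen.bi _ => (1 : k)
        | BRGen.p _ => (0 : k)),
    by rintro x y h
       induction h <;>
         simp [BRb, BRbi, BRp, FreeAlgebra.lift_ι_apply]⟩

end BRsection

/-!
Let `f` be the product of the commuting elements `1 - ε⁻¹ p_j` of `BR_n(ε)`. It satisfies
`f p_j = 0`, because `p_j² = ε p_j`, and it commutes with the braid generators, which permute the
`p_j`. Hence, for the projection `π : BR_n(ε) → k[B_n]` killing the `p_j` and its section
`ι : k[B_n] → BR_n(ε)`, the element `f` intertwines the identity with `ι ∘ π`: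
`f a = ι(π(a)) f`. An augmented algebra is a one-object linear category, and an intertwiner of
augmentation one is a natural transformation seen by the augmentation as the identity; as for nerves
of categories, it gives a homotopy between the induced maps of bar complexes. So `π` and `ι` are
inverse to each other on homology.
-/

section BarComplex

variable {k A} {B : Type} [Ring B] [Algebra k B] {C : Type} [Ring C] [Algebra k C] {q r : ℕ}

/-- The element `[a | x]` of the bar complex, for `a : A` and `x` of degree `q`. Its type displays
`A ⊗ A^{⊗ q}` as `barC k A (q + 1)`, to which it unfolds. -/
def barCons : A →ₗ[k] (barC k A q : Type) →ₗ[k] (barC k A (q + 1) : Type) :=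
  TensorProduct.mk k A (barC k A q)

/-- The linear map `[a | x] ↦ [g a | h x]` between bar modules. -/
def barConsMap (g : A →ₗ[k] B) (h : (barC k A q : Type) →ₗ[k] (barC k B r : Type)) :
    (barC k A (q + 1) : Type) →ₗ[k] (barC k B (r + 1) : Type) :=
  TensorProduct.map g h

/-- The tail `barB` of the bar differential, with source displayed as a bar module. -/
def barTail (q : ℕ) : (barC k A (q + 1) : Type) →ₗ[k] (barC k A q : Type) :=
  barB k A ε q

/-- The bar differential `bard`, with source displayed as a bar module. -/
def barDiff (q : ℕ) : (barC k A (q + 1) : Type) →ₗ[k] (barC k A q : Type) :=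
  bard k A ε q

lemma barC_hom_ext {M : Type} [AddCommGroup M] [Module k M]
    {f g : (barC k A (q + 1) : Type) →ₗ[k] M}
    (h : ∀ a x, f (barCons a x) = g (barCons a x)) : f = g :=
  TensorProduct.ext' (M := A) (N := barC k A q) h

lemma barAct_barCons (a b : A) (x : (barC k A q : Type)) :
    barAct k A ε (q + 1) a (barCons b x) = barCons (a * b) x := rfl

lemma barTail_zero_barCons (a : A) (x : (barC k A 0 : Type)) :
    barTail ε 0 (barCons a x) = -(ε a • x) := rfl

lemma barTail_succ_barCons (a : A) (x : (barC k A (q + 1) : Type)) :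
    barTail ε (q + 1) (barCons a x) =
      -barAct k A ε (q + 1) a x - barCons a (barTail ε q x) := rfl

lemma barDiff_barCons (a : A) (x : (barC k A q : Type)) :
    barDiff ε q (barCons a x) = ε a • x + barTail ε q (barCons a x) := rfl

section Functoriality

/-- The map `[a₁ | … | a_q] ↦ [φ a₁ | … | φ a_q]` induced by `φ` on bar complexes. -/
def barMap (φ : A →ₐ[k] B) : ∀ q : ℕ, (barC k A q : Type) →ₗ[k] (barC k B q : Type)
  | 0 => (LinearMap.id : k →ₗ[k] k)
  | q + 1 => barConsMap φ.toLinearMap (barMap φ q)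

lemma barMap_barCons (φ : A →ₐ[k] B) (a : A) (x : (barC k A q : Type)) :
    barMap φ (q + 1) (barCons a x) = barCons (φ a) (barMap φ q x) := rfl

lemma barMap_id : ∀ q : ℕ, barMap (AlgHom.id k A) q = LinearMap.id
  | 0 => rfl
  | q + 1 => barC_hom_ext fun a x => by
      rw [barMap_barCons, barMap_id q, AlgHom.id_apply, LinearMap.id_apply, LinearMap.id_apply]

lemma barMap_comp (ψ : B →ₐ[k] C) (φ : A →ₐ[k] B) :
    ∀ q : ℕ, barMap (ψ.comp φ) q = barMap ψ q ∘ₗ barMap φ q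
  | 0 => rfl
  | q + 1 => barC_hom_ext fun a x => by
      simp only [barMap_barCons, barMap_comp ψ φ q, LinearMap.comp_apply, AlgHom.comp_apply]

variable {ε} {η : B →ₐ[k] k} {φ : A →ₐ[k] B}

lemma barMap_barAct (a : A) (x : (barC k A (q + 1) : Type)) :
    barMap φ (q + 1) (barAct k A ε (q + 1) a x) =
      barAct k B η (q + 1) (φ a) (barMap φ (q + 1) x) := by
  suffices barMap φ (q + 1) ∘ₗ barAct k A ε (q + 1) a =
      barAct k B η (q + 1) (φ a) ∘ₗ barMap φ (q + 1) from LinearMap.congr_fun this x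
  refine barC_hom_ext fun b y => ?_
  simp only [LinearMap.comp_apply, barAct_barCons, barMap_barCons, map_mul]

lemma barMap_comp_barTail (hφ : η.comp φ = ε) (q : ℕ) :
    barMap φ q ∘ₗ barTail ε q = barTail η q ∘ₗ barMap φ (q + 1) := by
  subst hφ
  induction q with
  | zero =>
    refine barC_hom_ext fun a x => ?_
    simp only [LinearMap.comp_apply, barTail_zero_barCons, barMap_barCons, AlgHom.comp_apply,
      map_neg, map_smul]
  | succ q ih =>
    refine barC_hom_ext fun a x => ?_
    have ih_x := LinearMap.congr_fun ih x
    simp only [LinearMap.comp_apply] at ih_x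
    simp only [LinearMap.comp_apply, barTail_succ_barCons, barMap_barCons, map_neg, map_sub,
      barMap_barAct (η := η), ih_x]

lemma barMap_comp_barDiff (hφ : η.comp φ = ε) (q : ℕ) :
    barMap φ q ∘ₗ barDiff ε q = barDiff η q ∘ₗ barMap φ (q + 1) := by
  subst hφ
  refine barC_hom_ext fun a x => ?_
  have h_tail := LinearMap.congr_fun (barMap_comp_barTail (η := η) (φ := φ) rfl q) (barCons a x)
  simp only [LinearMap.comp_apply, barMap_barCons] at h_tail
  simp only [LinearMap.comp_apply, barDiff_barCons, barMap_barCons, map_add, map_smul, h_tail,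
    AlgHom.comp_apply]

lemma mem_barCycles_succ {x : (barC k A (q + 1) : Type)} :
    x ∈ barCycles k A ε (q + 1) ↔ barDiff ε q x = 0 := Iff.rfl

lemma barMap_mem_barCycles (hφ : η.comp φ = ε) :
    ∀ {q : ℕ} {x : (barC k A q : Type)}, x ∈ barCycles k A ε q → barMap φ q x ∈ barCycles k B η q
  | 0, _, _ => Submodule.mem_top
  | q + 1, x, hx => by
    have h_diff := LinearMap.congr_fun (barMap_comp_barDiff hφ q) x
    simp only [LinearMap.comp_apply, mem_barCycles_succ.1 hx, map_zero] at h_diff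
    exact mem_barCycles_succ.2 h_diff.symm

/-- The map from cycles of the bar complex to their homology classes. -/
def barTorMk (ε : A →ₐ[k] k) (q : ℕ) : barCycles k A ε q →ₗ[k] barTor k A ε q :=
  Submodule.mkQ _

lemma barTorMk_surjective : Function.Surjective (barTorMk ε q) :=
  Submodule.mkQ_surjective _

lemma barTorMk_eq_iff {x y : barCycles k A ε q} :
    barTorMk ε q x = barTorMk ε q y ↔ (x - y : (barC k A q : Type)) ∈ (barDiff ε q).range :=
  Submodule.Quotient.eq _

/-- The map induced on `Tor_q` by a map of augmented algebras. -/
def barTorMap (φ : A →ₐ[k] B) (hφ : η.comp φ = ε) (q : ℕ) :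
    barTor k A ε q →ₗ[k] barTor k B η q :=
  Submodule.mapQ _ _ ((barMap φ q).restrict fun _ => barMap_mem_barCycles hφ) <| by
    rintro x ⟨y, hy⟩
    exact ⟨barMap φ (q + 1) y, (LinearMap.congr_fun (barMap_comp_barDiff hφ q) y).symm.trans
      (congrArg (barMap φ q) hy)⟩

lemma barTorMap_barTorMk (hφ : η.comp φ = ε) (x : barCycles k A ε q) :
    barTorMap φ hφ q (barTorMk ε q x) =
      barTorMk η q ⟨barMap φ q x, barMap_mem_barCycles hφ x.2⟩ := rfl

lemma barTorMap_id (q : ℕ) :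
    barTorMap (AlgHom.id k A) (AlgHom.comp_id ε) q = LinearMap.id := by
  ext x
  obtain ⟨x, rfl⟩ := barTorMk_surjective x
  simp only [barTorMap_barTorMk, barMap_id, LinearMap.id_apply]

lemma barTorMap_comp {θ : C →ₐ[k] k} {ψ : B →ₐ[k] C} (hψ : θ.comp ψ = η) (hφ : η.comp φ = ε)
    (q : ℕ) :
    barTorMap (ψ.comp φ) (by rw [← AlgHom.comp_assoc, hψ, hφ]) q =
      barTorMap ψ hψ q ∘ₗ barTorMap φ hφ q := by
  ext x
  obtain ⟨x, rfl⟩ := barTorMk_surjective x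
  simp only [barTorMap_barTorMk, barMap_comp, LinearMap.comp_apply]

end Functoriality

section Intertwiner

variable {φ ψ : A →ₐ[k] B} {u : B} {ε} {η : B →ₐ[k] k}

/-- The homotopy
`[a₁ | … | a_q] ↦ ∑ (-1)^i [φ a₁ | … | φ a_i | u | ψ a_{i+1} | … | ψ a_q]`
from the map induced by `φ` to the one induced by `ψ`, for `u` with `u * ψ a = φ a * u`. -/
def barHomotopy (φ ψ : A →ₐ[k] B) (u : B) :
    ∀ q : ℕ, (barC k A q : Type) →ₗ[k] (barC k B (q + 1) : Type)
  | 0 => barCons u ∘ₗ barMap ψ 0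
  | q + 1 => barCons u ∘ₗ barMap ψ (q + 1) - barConsMap φ.toLinearMap (barHomotopy φ ψ u q)

lemma barHomotopy_zero (x : (barC k A 0 : Type)) :
    barHomotopy φ ψ u 0 x = barCons u (barMap ψ 0 x) := rfl

lemma barHomotopy_succ_barCons (a : A) (x : (barC k A q : Type)) :
    barHomotopy φ ψ u (q + 1) (barCons a x) =
      barCons u (barMap ψ (q + 1) (barCons a x)) - barCons (φ a) (barHomotopy φ ψ u q x) := rfl

lemma barHomotopy_barAct (hu : ∀ a, SemiconjBy u (ψ a) (φ a)) (a : A)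
    (x : (barC k A (q + 1) : Type)) :
    barHomotopy φ ψ u (q + 1) (barAct k A ε (q + 1) a x) =
      barCons u (barMap ψ (q + 1) (barAct k A ε (q + 1) a x)) +
        barAct k B η (q + 2) (φ a) (barHomotopy φ ψ u (q + 1) x) -
        barCons (u * ψ a) (barMap ψ (q + 1) x) := by
  suffices barHomotopy φ ψ u (q + 1) ∘ₗ barAct k A ε (q + 1) a =
      barCons u ∘ₗ barMap ψ (q + 1) ∘ₗ barAct k A ε (q + 1) a +
        barAct k B η (q + 2) (φ a) ∘ₗ barHomotopy φ ψ u (q + 1) -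
        barCons (u * ψ a) ∘ₗ barMap ψ (q + 1) from LinearMap.congr_fun this x
  refine barC_hom_ext fun b y => ?_
  simp only [LinearMap.comp_apply, LinearMap.add_apply, LinearMap.sub_apply, barAct_barCons,
    barHomotopy_succ_barCons, map_sub, map_mul, (hu a).eq]
  abel

lemma barTail_comp_barHomotopy (hψ : η.comp ψ = ε) (hηu : η u = 1)
    (hu : ∀ a, SemiconjBy u (ψ a) (φ a)) (q : ℕ) :
    barTail η (q + 1) ∘ₗ barHomotopy φ ψ u (q + 1) + barHomotopy φ ψ u q ∘ₗ barTail ε q =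
      -barMap φ (q + 1) := by
  induction q with
  | zero =>
    refine barC_hom_ext fun a x => ?_
    have h_aug : η (ψ a) = ε a := DFunLike.congr_fun hψ a
    simp only [LinearMap.add_apply, LinearMap.comp_apply, LinearMap.neg_apply,
      barHomotopy_succ_barCons, barHomotopy_zero, barTail_succ_barCons, barTail_zero_barCons,
      barMap_barCons, barAct_barCons, map_sub, map_neg, map_smul, (hu a).eq, h_aug, hηu, one_smul]
    have h_map : barMap ψ 0 x = barMap φ 0 x := rfl
    rw [h_map]
    abel
  | succ q ih =>
    refine barC_hom_ext fun a x => ?_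
    have ih_x := congrArg (barCons (φ a)) (LinearMap.congr_fun ih x)
    have h_tail := LinearMap.congr_fun (barMap_comp_barTail hψ q) x
    simp only [LinearMap.add_apply, LinearMap.comp_apply, LinearMap.neg_apply, map_add,
      map_neg] at ih_x h_tail
    simp only [LinearMap.add_apply, LinearMap.comp_apply, LinearMap.neg_apply,
      barHomotopy_succ_barCons, barTail_succ_barCons, barMap_barCons, barAct_barCons,
      barHomotopy_barAct (η := η) hu, barMap_barAct (η := η), map_sub, map_neg, h_tail, ← ih_x]
    abel

theorem barDiff_comp_barHomotopy (hφ : η.comp φ = ε) (hψ : η.comp ψ = ε) (hηu : η u = 1)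
    (hu : ∀ a, SemiconjBy u (ψ a) (φ a)) (q : ℕ) :
    barDiff η (q + 1) ∘ₗ barHomotopy φ ψ u (q + 1) + barHomotopy φ ψ u q ∘ₗ barDiff ε q =
      barMap ψ (q + 1) - barMap φ (q + 1) := by
  refine barC_hom_ext fun a x => ?_
  have h_tail :=
    LinearMap.congr_fun (barTail_comp_barHomotopy hψ hηu hu q) (barCons a x)
  have h_aug : η (φ a) = ε a := DFunLike.congr_fun hφ a
  simp only [LinearMap.add_apply, LinearMap.comp_apply, LinearMap.neg_apply,
    barHomotopy_succ_barCons, map_sub] at h_tail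
  simp only [LinearMap.add_apply, LinearMap.sub_apply, LinearMap.comp_apply,
    barHomotopy_succ_barCons, map_sub, map_add, map_smul, barDiff_barCons, hηu, h_aug, one_smul,
    sub_eq_add_neg _ (barMap φ _ _), ← h_tail]
  abel

theorem barTorMap_eq_of_semiconjBy (hφ : η.comp φ = ε) (hψ : η.comp ψ = ε) (hηu : η u = 1)
    (hu : ∀ a, SemiconjBy u (ψ a) (φ a)) (q : ℕ) : barTorMap φ hφ q = barTorMap ψ hψ q := by
  ext x
  obtain ⟨⟨x, hx⟩, rfl⟩ := barTorMk_surjective x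
  rw [eq_comm, barTorMap_barTorMk, barTorMap_barTorMk, barTorMk_eq_iff]
  cases q with
  | zero => exact (sub_self x).symm ▸ Submodule.zero_mem _
  | succ q =>
    have h_homotopy := LinearMap.congr_fun (barDiff_comp_barHomotopy hφ hψ hηu hu q) x
    simp only [LinearMap.add_apply, LinearMap.comp_apply, mem_barCycles_succ.1 hx, map_zero,
      add_zero] at h_homotopy
    exact ⟨barHomotopy φ ψ u (q + 1) x, h_homotopy⟩

lemma barTorMap_comp_eq_id {φ : A →ₐ[k] B} {ψ : B →ₐ[k] A} {u : A} (hφ : η.comp φ = ε)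
    (hψ : ε.comp ψ = η) (hεu : ε u = 1) (hu : ∀ a, SemiconjBy u a (ψ (φ a))) (q : ℕ) :
    barTorMap ψ hψ q ∘ₗ barTorMap φ hφ q = LinearMap.id := by
  rw [← barTorMap_comp, ← barTorMap_id]
  exact barTorMap_eq_of_semiconjBy _ _ hεu hu q

/-- Maps of augmented algebras `φ` and `ψ` in opposite directions, with intertwiners of augmentation
one from the identities to `ψ ∘ φ` and `φ ∘ ψ`, are inverse to each other on `Tor_q`. -/
def barTorEquiv {φ : A →ₐ[k] B} {ψ : B →ₐ[k] A} {u : A} {v : B} (hφ : η.comp φ = ε)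
    (hψ : ε.comp ψ = η) (hεu : ε u = 1) (hu : ∀ a, SemiconjBy u a (ψ (φ a))) (hηv : η v = 1)
    (hv : ∀ b, SemiconjBy v b (φ (ψ b))) (q : ℕ) : barTor k A ε q ≃ₗ[k] barTor k B η q :=
  LinearEquiv.ofLinearMap (barTorMap φ hφ q) (barTorMap ψ hψ q)
    (barTorMap_comp_eq_id hψ hφ hηv hv q) (barTorMap_comp_eq_id hφ hψ hεu hu q)

end Intertwiner

end BarComplex

theorem commute_noncommProd_univ_of_perm {ι M : Type*} [Fintype ι] [Monoid M] {x : ι → M}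
    (comm : Pairwise (Function.onFun Commute x)) {b : M} (σ : Equiv.Perm ι)
    (hb : ∀ i, SemiconjBy b (x i) (x (σ i))) :
    Commute b (Finset.univ.noncommProd x (comm.set_pairwise _)) := by
  suffices ∀ s : Finset ι, SemiconjBy b (s.noncommProd x (comm.set_pairwise _))
      ((s.map σ.toEmbedding).noncommProd x (comm.set_pairwise _)) by
    have h_univ := this Finset.univ
    simp only [Finset.map_univ_equiv] at h_univ
    exact h_univ
  intro s
  induction s using Finset.cons_induction with
  | empty => exact SemiconjBy.one_right b
  | cons i s hi ih =>
    have h_map_cons : ((s.cons i hi).map σ.toEmbedding).noncommProd x (comm.set_pairwise _) =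
        x (σ i) * (s.map σ.toEmbedding).noncommProd x (comm.set_pairwise _) :=
      (Finset.noncommProd_congr (Finset.map_cons ..) (fun _ _ => rfl) _).trans
        (Finset.noncommProd_cons ..)
    rw [h_map_cons, Finset.noncommProd_cons]
    exact (hb i).mul_right ih

namespace BraidGroup

variable {n : ℕ} {i j : Fin (n - 1)}

lemma of_braid (hij : (i : ℕ) + 1 = j) :
    (PresentedGroup.of i * PresentedGroup.of j * PresentedGroup.of i : BraidGroup n) =
      PresentedGroup.of j * PresentedGroup.of i * PresentedGroup.of j :=
  mul_inv_eq_one.1 (PresentedGroup.one_of_mem (rels := braidRels (n - 1)) ⟨i, j, .inl ⟨hij, rfl⟩⟩)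

lemma of_comm (hij : (i : ℕ) + 1 < j) :
    (PresentedGroup.of i * PresentedGroup.of j : BraidGroup n) =
      PresentedGroup.of j * PresentedGroup.of i :=
  mul_inv_eq_one.1 (PresentedGroup.one_of_mem (rels := braidRels (n - 1)) ⟨i, j, .inr ⟨hij, rfl⟩⟩)

end BraidGroup

namespace BRAlg

variable {k} {n : ℕ} {ε : k}

variable (k ε) in
/-- The positive crossing `b i`, as a unit with inverse the negative crossing `bi i`. -/
def crossing (i : Fin (n - 1)) : (BRAlg k n ε)ˣ where
  val := RingQuot.mkAlgHom k _ (BRb k n i)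
  inv := RingQuot.mkAlgHom k _ (BRbi k n i)
  val_inv := by simpa only [map_mul, map_one] using RingQuot.mkAlgHom_rel k (BRRel.b_inv_r i)
  inv_val := by simpa only [map_mul, map_one] using RingQuot.mkAlgHom_rel k (BRRel.b_inv_l i)

variable (k ε) in
/-- The diagram `p j`: the identity with strand `j` deleted. -/
def cut (j : Fin n) : BRAlg k n ε := RingQuot.mkAlgHom k _ (BRp k n j)

lemma crossing_braid {i j : Fin (n - 1)} (hij : (i : ℕ) + 1 = j) :
    crossing k ε i * crossing k ε j * crossing k ε i =
      crossing k ε j * crossing k ε i * crossing k ε j :=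
  Units.ext <| by
    simpa only [map_mul] using! RingQuot.mkAlgHom_rel k (BRRel.b_braid (ε := ε) i j hij.symm)

lemma crossing_comm {i j : Fin (n - 1)} (hij : (i : ℕ) + 1 < j) :
    crossing k ε i * crossing k ε j = crossing k ε j * crossing k ε i :=
  Units.ext <| by
    simpa only [map_mul] using! RingQuot.mkAlgHom_rel k (BRRel.bb_comm (ε := ε) i j hij)

lemma cut_mul_self (j : Fin n) : cut k ε j * cut k ε j = ε • cut k ε j := by
  simpa only [map_mul, map_smul] using! RingQuot.mkAlgHom_rel k (BRRel.p_sq (ε := ε) j)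

lemma commute_cut (j l : Fin n) : Commute (cut k ε j) (cut k ε l) := by
  have of_lt {j l : Fin n} (hjl : j < l) : Commute (cut k ε j) (cut k ε l) := by
    simpa only [map_mul] using! RingQuot.mkAlgHom_rel k (BRRel.pp_comm (ε := ε) j l hjl)
  rcases lt_trichotomy j l with hjl | rfl | hlj
  · exact of_lt hjl
  · exact Commute.refl _
  · exact (of_lt hlj).symm

lemma semiconjBy_crossing_cut (i : Fin (n - 1)) (j : Fin n) :
    SemiconjBy (crossing k ε i : BRAlg k n ε) (cut k ε j) (cut k ε (braidGen n i j)) := by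
  have slide {j l : Fin n} (h : BRRel k n ε (BRb k n i * BRp k n j) (BRp k n l * BRb k n i)) :
      SemiconjBy (crossing k ε i : BRAlg k n ε) (cut k ε j) (cut k ε l) := by
    simpa only [map_mul] using! RingQuot.mkAlgHom_rel k h
  rw [braidGen]
  by_cases hj : (j : ℕ) = i
  · rw [show j = ⟨i, by omega⟩ from Fin.ext hj, Equiv.swap_apply_left]
    exact slide (.bp_slide i _ _ rfl rfl)
  by_cases hj' : (j : ℕ) = i + 1
  · rw [show j = ⟨i + 1, by omega⟩ from Fin.ext hj', Equiv.swap_apply_right]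
    exact slide (.bp_slide' i _ _ rfl rfl)
  · rw [Equiv.swap_apply_of_ne_of_ne (Fin.ne_of_val_ne hj) (Fin.ne_of_val_ne hj')]
    exact slide (.bp_comm i j ⟨hj, hj'⟩)

section GroupAlgebra

/-- The projection `BR_n(ε) → k[B_n]` sending diagrams with a missing strand to `0`. -/
def toGroupAlgebra : BRAlg k n ε →ₐ[k] MonoidAlgebra k (BraidGroup n) :=
  RingQuot.liftAlgHom k ⟨FreeAlgebra.lift k fun
    | .b i => MonoidAlgebra.of k _ (PresentedGroup.of i)
    | .bi i => MonoidAlgebra.of k _ (PresentedGroup.of i)⁻¹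
    | .p _ => 0, by
    intro x y h
    induction h with
    | b_inv_r i | b_inv_l i =>
      simp only [map_mul, FreeAlgebra.lift_ι_apply, map_one]
      simp only [← map_mul, mul_inv_cancel, inv_mul_cancel, map_one]
    | b_braid i j h =>
      simp only [map_mul, FreeAlgebra.lift_ι_apply]
      simp only [← map_mul, BraidGroup.of_braid h.symm]
    | bb_comm i j h =>
      simp only [map_mul, FreeAlgebra.lift_ι_apply]
      simp only [← map_mul, BraidGroup.of_comm h]
    | _ => simp only [map_mul, map_smul, FreeAlgebra.lift_ι_apply, mul_zero, zero_mul, smul_zero]⟩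

variable (k ε) in
/-- The inclusion of braids among the invertible elements of `BR_n(ε)`. -/
def braidUnits : BraidGroup n →* (BRAlg k n ε)ˣ :=
  PresentedGroup.toGroup (f := crossing k ε) <| by
    rintro _ ⟨i, j, ⟨hij, rfl⟩ | ⟨hij, rfl⟩⟩ <;>
      simp only [map_mul, map_inv, FreeGroup.lift_apply_of, mul_inv_eq_one]
    · exact crossing_braid hij
    · exact crossing_comm hij

/-- The section `k[B_n] → BR_n(ε)` of `toGroupAlgebra`. -/
def ofGroupAlgebra : MonoidAlgebra k (BraidGroup n) →ₐ[k] BRAlg k n ε :=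
  MonoidAlgebra.lift k _ _ ((Units.coeHom _).comp (braidUnits k ε))

lemma toGroupAlgebra_crossing (i : Fin (n - 1)) :
    toGroupAlgebra (crossing k ε i : BRAlg k n ε) = MonoidAlgebra.of k _ (PresentedGroup.of i) := by
  simp [toGroupAlgebra, crossing]

lemma toGroupAlgebra_crossing_inv (i : Fin (n - 1)) :
    toGroupAlgebra (↑(crossing k ε i)⁻¹ : BRAlg k n ε) =
      MonoidAlgebra.of k _ (PresentedGroup.of i)⁻¹ := by
  simp [toGroupAlgebra, crossing]

lemma toGroupAlgebra_cut (j : Fin n) : toGroupAlgebra (cut k ε j) = 0 := by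
  simp [toGroupAlgebra, cut]

lemma ofGroupAlgebra_of (g : BraidGroup n) :
    (ofGroupAlgebra (MonoidAlgebra.of k _ g) : BRAlg k n ε) = braidUnits k ε g := by
  rw [ofGroupAlgebra, MonoidAlgebra.lift_of]; rfl

lemma braidUnits_of (i : Fin (n - 1)) :
    braidUnits k ε (PresentedGroup.of i) = crossing k ε i :=
  PresentedGroup.toGroup.of _

lemma toGroupAlgebra_comp_ofGroupAlgebra :
    (toGroupAlgebra (ε := ε)).comp ofGroupAlgebra =
      AlgHom.id k (MonoidAlgebra k (BraidGroup n)) := by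
  refine MonoidAlgebra.algHom_ext' ?_ (Subsingleton.elim _ _)
  refine MonoidHom.eq_of_eqOn_dense (PresentedGroup.closure_range_of _) ?_
  rintro _ ⟨i, rfl⟩
  change toGroupAlgebra (ofGroupAlgebra (MonoidAlgebra.of k _ (PresentedGroup.of i))) =
    MonoidAlgebra.of k _ (PresentedGroup.of i)
  rw [ofGroupAlgebra_of, braidUnits_of, toGroupAlgebra_crossing]

lemma groupAug_comp_toGroupAlgebra :
    (groupAug k (BraidGroup n)).comp toGroupAlgebra = BRaug k n ε := by
  refine RingQuot.ringQuot_ext' _ _ _ (FreeAlgebra.hom_ext (funext fun x => ?_))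
  cases x <;> simp [toGroupAlgebra, BRaug, groupAug]

lemma BRaug_comp_ofGroupAlgebra :
    (BRaug k n ε).comp ofGroupAlgebra = groupAug k (BraidGroup n) := by
  rw [← groupAug_comp_toGroupAlgebra, AlgHom.comp_assoc, toGroupAlgebra_comp_ofGroupAlgebra,
    AlgHom.comp_id]

end GroupAlgebra

section CutAnnihilator

lemma pairwise_commute_one_sub_smul_cut (δ : k) :
    Pairwise (Function.onFun Commute fun j : Fin n => 1 - δ • cut k ε j) := fun j l _ =>
  (Commute.one_left _).sub_left
    ((Commute.one_right _).sub_right (((commute_cut j l).smul_left δ).smul_right δ))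

/-- The product of the commuting elements `1 - δ p_j`. It annihilates all cuts `p_j` when
`δ = ε⁻¹`. -/
def cutAnnihilator (δ : k) : BRAlg k n ε :=
  Finset.univ.noncommProd (fun j => 1 - δ • cut k ε j)
    ((pairwise_commute_one_sub_smul_cut δ).set_pairwise _)

variable {δ : k}

lemma cutAnnihilator_mul_cut (hδ : δ * ε = 1) (j : Fin n) :
    cutAnnihilator δ * cut k ε j = 0 := by
  have h_factor : (1 - δ • cut k ε j) * cut k ε j = 0 := by
    rw [sub_mul, one_mul, smul_mul_assoc, cut_mul_self, smul_smul, hδ, one_smul, sub_self]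
  rw [cutAnnihilator, ← Finset.noncommProd_erase_mul _ (Finset.mem_univ j), mul_assoc, h_factor,
    mul_zero]

lemma commute_crossing_cutAnnihilator (i : Fin (n - 1)) :
    Commute (crossing k ε i : BRAlg k n ε) (cutAnnihilator δ) :=
  commute_noncommProd_univ_of_perm (pairwise_commute_one_sub_smul_cut δ) (braidGen n i) fun j =>
    (SemiconjBy.one_right _).sub_right ((semiconjBy_crossing_cut i j).smul_right δ)

lemma BRaug_cutAnnihilator : BRaug k n ε (cutAnnihilator δ) = 1 := by
  have h_cut (j : Fin n) : BRaug k n ε (cut k ε j) = 0 := by simp [BRaug, cut]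
  rw [cutAnnihilator, Finset.map_noncommProd, Finset.noncommProd_eq_prod]
  exact Finset.prod_eq_one fun j _ => by rw [map_sub, map_one, map_smul, h_cut, smul_zero, sub_zero]

theorem semiconjBy_cutAnnihilator (hδ : δ * ε = 1) (a : BRAlg k n ε) :
    SemiconjBy (cutAnnihilator δ) a (ofGroupAlgebra (toGroupAlgebra a)) := by
  obtain ⟨a, rfl⟩ := RingQuot.mkAlgHom_surjective k (BRRel k n ε) a
  induction a using FreeAlgebra.induction with
  | grade0 r => simpa only [AlgHom.commutes] using! (Algebra.commutes r _).symm
  | grade1 x =>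
    have h_crossing (i : Fin (n - 1)) :
        SemiconjBy (cutAnnihilator δ : BRAlg k n ε) (crossing k ε i) (crossing k ε i) :=
      (commute_crossing_cutAnnihilator i).symm
    cases x with
    | b i =>
      change SemiconjBy _ _ (ofGroupAlgebra (toGroupAlgebra (crossing k ε i : BRAlg k n ε)))
      rw [toGroupAlgebra_crossing, ofGroupAlgebra_of, braidUnits_of]
      exact h_crossing i
    | bi i =>
      change SemiconjBy _ _ (ofGroupAlgebra (toGroupAlgebra (↑(crossing k ε i)⁻¹ : BRAlg k n ε)))
      rw [toGroupAlgebra_crossing_inv, ofGroupAlgebra_of, map_inv, braidUnits_of]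
      exact (h_crossing i).units_inv_right
    | p j =>
      change SemiconjBy _ (cut k ε j) (ofGroupAlgebra (toGroupAlgebra (cut k ε j)))
      rw [toGroupAlgebra_cut, map_zero, SemiconjBy, cutAnnihilator_mul_cut hδ, zero_mul]
  | mul a b ha hb => simpa only [map_mul] using ha.mul_right hb
  | add a b ha hb => simpa only [map_add] using ha.add_right hb

end CutAnnihilator

end BRAlg

/-- **Homology of braided rook algebras** (invertible parameter).
Let `k` be a commutative unital ring, `n` a natural number, and `ε ∈ k` invertible.
Then there is an isomorphism of graded `k`-modules
`Tor_*^{BR_n(ε)}(𝟙,𝟙) ≅ Tor_*^{k[B_n]}(k,k) = H_*(B_n; k)`,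
where `B_n` is the braid group on `n` strands and `k` carries the trivial action. -/
theorem braided_rook_homology (k : Type) [CommRing k] (n : ℕ) (ε : k) (hε : IsUnit ε)
    (q : ℕ) :
    Nonempty ((barTor k (BRAlg k n ε) (BRaug k n ε) q) ≃ₗ[k]
      (groupTor k (BraidGroup n) q)) := by
  obtain ⟨δ, hδ⟩ := hε.exists_left_inv
  have h_section (b : MonoidAlgebra k (BraidGroup n)) :
      BRAlg.toGroupAlgebra (BRAlg.ofGroupAlgebra (ε := ε) b) = b :=
    DFunLike.congr_fun BRAlg.toGroupAlgebra_comp_ofGroupAlgebra b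
  exact ⟨barTorEquiv BRAlg.groupAug_comp_toGroupAlgebra BRAlg.BRaug_comp_ofGroupAlgebra
    BRAlg.BRaug_cutAnnihilator (BRAlg.semiconjBy_cutAnnihilator hδ)
    (map_one _) (fun b => (h_section b).symm ▸ SemiconjBy.one_left b) q⟩
end
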